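/- For all a, b > 0, c > 1 and t ≥ 0, ∫₀^t [a + b(t−τ)]^{−c} (1+τ)^{−c} dτ ≤ (a+b) 2^c / (b (min{a,b})^c (c−1) (1+t)^c). -/

import Mathlib

/-!
A convolution of two nonincreasing functions on `[0, t]` is controlled by their values at the
midpoint: when `τ ≤ t / 2` the factor evaluated at `t - τ` is at most its value at `t / 2`, and
when `τ ≥ t / 2` the factor evaluated at `τ` is. For the powers at hand these values are
`O((1 + t) ^ (-c))`, while the integral of the remaining factor is bounded in `t` as `c > 1`.
-/

open Set MeasureTheory

theorem integral_convolution_le_of_antitoneOn {f g : ℝ → ℝ} {s t : ℝ} (hs : s ∈ Icc 0 t)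
    (hf : AntitoneOn f (Icc 0 t)) (hg : AntitoneOn g (Icc 0 t))
    (hft : 0 ≤ f t) (hgt : 0 ≤ g t) :
    ∫ τ in 0..t, f (t - τ) * g τ ≤
      f (t - s) * (∫ τ in 0..t, g τ) + (∫ τ in 0..t, f τ) * g s := by
  have ht : 0 ≤ t := hs.1.trans hs.2
  have hf₀ {x : ℝ} (hx : x ∈ Icc 0 t) : 0 ≤ f x := hft.trans (hf hx (right_mem_Icc.2 ht) hx.2)
  have hg₀ {x : ℝ} (hx : x ∈ Icc 0 t) : 0 ≤ g x := hgt.trans (hg hx (right_mem_Icc.2 ht) hx.2)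
  have reflect_mem {τ : ℝ} (hτ : τ ∈ Icc 0 t) : t - τ ∈ Icc 0 t :=
    ⟨sub_nonneg.2 hτ.2, sub_le_self t hτ.1⟩
  have pointwise : ∀ τ ∈ Icc 0 t, f (t - τ) * g τ ≤ f (t - s) * g τ + f (t - τ) * g s := by
    intro τ hτ
    have hfτ := hf₀ (reflect_mem hτ)
    rcases le_total τ s with hτs | hsτ
    · have hle : f (t - τ) ≤ f (t - s) :=
        hf (reflect_mem hs) (reflect_mem hτ) (sub_le_sub_left hτs t)
      exact le_add_of_le_of_nonneg (mul_le_mul_of_nonneg_right hle (hg₀ hτ))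
        (mul_nonneg hfτ (hg₀ hs))
    · exact le_add_of_nonneg_of_le (mul_nonneg (hf₀ (reflect_mem hs)) (hg₀ hτ))
        (mul_le_mul_of_nonneg_left (hg hs hτ hsτ) hfτ)
  have hg_int : IntervalIntegrable (fun τ ↦ f (t - s) * g τ) volume 0 t :=
    (AntitoneOn.intervalIntegrable (by rwa [uIcc_of_le ht])).const_mul _
  have hf_int : IntervalIntegrable (fun τ ↦ f (t - τ) * g s) volume 0 t := by
    have hf_reflect : MonotoneOn (fun τ ↦ f (t - τ)) (uIcc 0 t) := by
      rw [uIcc_of_le ht]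
      exact fun x hx y hy hxy ↦ hf (reflect_mem hy) (reflect_mem hx) (sub_le_sub_left hxy t)
    exact hf_reflect.intervalIntegrable.mul_const _
  calc ∫ τ in 0..t, f (t - τ) * g τ
      ≤ ∫ τ in 0..t, (f (t - s) * g τ + f (t - τ) * g s) := by
        simp only [intervalIntegral.integral_of_le ht]
        refine integral_mono_of_nonneg ?_ (hg_int.add hf_int).1 ?_ <;>
          filter_upwards [ae_restrict_mem measurableSet_Ioc] with τ hτ
        · exact mul_nonneg (hf₀ (reflect_mem (Ioc_subset_Icc_self hτ)))
            (hg₀ (Ioc_subset_Icc_self hτ))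
        · exact pointwise τ (Ioc_subset_Icc_self hτ)
    _ = f (t - s) * (∫ τ in 0..t, g τ) + (∫ τ in 0..t, f τ) * g s := by
        rw [intervalIntegral.integral_add hg_int hf_int, intervalIntegral.integral_const_mul,
          intervalIntegral.integral_mul_const, intervalIntegral.integral_comp_sub_left f t,
          sub_self, sub_zero]

section AffinePower

variable {a b c t : ℝ}

theorem antitoneOn_add_mul_rpow_neg (ha : 0 < a) (hb : 0 ≤ b) (hc : 0 ≤ c) :
    AntitoneOn (fun x ↦ (a + b * x) ^ (-c)) (Ici 0) := by
  intro x (hx : 0 ≤ x) y _ hxy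
  exact Real.rpow_le_rpow_of_nonpos (by positivity) (by gcongr) (neg_nonpos.2 hc)

theorem integral_add_mul_rpow_neg_le (ha : 0 < a) (hb : 0 < b) (hc : 1 < c)
    (ht : 0 < a + b * t) :
    ∫ x in 0..t, (a + b * x) ^ (-c) ≤ a ^ (1 - c) / (b * (c - 1)) := by
  have hzero : (0 : ℝ) ∉ uIcc a (a + b * t) := notMem_uIcc_of_lt ha ht
  calc ∫ x in 0..t, (a + b * x) ^ (-c)
      = b⁻¹ * ∫ y in a..(a + b * t), y ^ (-c) := by
        rw [intervalIntegral.integral_comp_add_mul (fun y ↦ y ^ (-c)) hb.ne', mul_zero, add_zero,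
          smul_eq_mul]
    _ = b⁻¹ * (((a + b * t) ^ (1 - c) - a ^ (1 - c)) / (1 - c)) := by
        rw [integral_rpow (Or.inr ⟨by linarith, hzero⟩), neg_add_eq_sub]
    _ = (a ^ (1 - c) - (a + b * t) ^ (1 - c)) / (b * (c - 1)) := by
        rw [← neg_div_neg_eq, neg_sub, neg_sub, inv_mul_eq_div, div_div, mul_comm (c - 1)]
    _ ≤ a ^ (1 - c) / (b * (c - 1)) :=
        div_le_div_of_nonneg_right (sub_le_self _ (by positivity))
          (mul_pos hb (sub_pos.2 hc)).le

theorem add_mul_half_rpow_neg_le {m : ℝ} (hm : 0 < m) (hma : m ≤ a) (hmb : m ≤ b)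
    (hc : 0 ≤ c) (ht : 0 ≤ t) :
    (a + b * (t / 2)) ^ (-c) ≤ 2 ^ c / (m ^ c * (1 + t) ^ c) := by
  have hbase : m * (1 + t) / 2 ≤ a + b * (t / 2) := by
    calc m * (1 + t) / 2 ≤ m + m * (t / 2) := by linarith
      _ ≤ a + b * (t / 2) := by gcongr
  calc (a + b * (t / 2)) ^ (-c) ≤ (m * (1 + t) / 2) ^ (-c) :=
        Real.rpow_le_rpow_of_nonpos (by positivity) hbase (neg_nonpos.2 hc)
    _ = 2 ^ c / (m ^ c * (1 + t) ^ c) := by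
        rw [Real.rpow_neg (by positivity), Real.div_rpow (by positivity) zero_le_two,
          Real.mul_rpow hm.le (by positivity), inv_div]

theorem integral_convolution_add_mul_rpow_neg_le {p q d : ℝ} (ha : 0 < a) (hb : 0 < b)
    (hc : 1 < c) (hp : 0 < p) (hq : 0 < q) (hd : 1 < d) (ht : 0 ≤ t) :
    ∫ τ in 0..t, (a + b * (t - τ)) ^ (-c) * (p + q * τ) ^ (-d) ≤
      (a + b * (t / 2)) ^ (-c) * (p ^ (1 - d) / (q * (d - 1))) +
        a ^ (1 - c) / (b * (c - 1)) * (p + q * (t / 2)) ^ (-d) := by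
  let f (x : ℝ) : ℝ := (a + b * x) ^ (-c)
  let g (x : ℝ) : ℝ := (p + q * x) ^ (-d)
  have hf : AntitoneOn f (Ici 0) := antitoneOn_add_mul_rpow_neg ha hb.le (zero_le_one.trans hc.le)
  have hg : AntitoneOn g (Ici 0) := antitoneOn_add_mul_rpow_neg hp hq.le (zero_le_one.trans hd.le)
  calc ∫ τ in 0..t, f (t - τ) * g τ
      ≤ f (t - t / 2) * (∫ τ in 0..t, g τ) + (∫ τ in 0..t, f τ) * g (t / 2) :=
        integral_convolution_le_of_antitoneOn ⟨by positivity, half_le_self ht⟩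
          (hf.mono Icc_subset_Ici_self) (hg.mono Icc_subset_Ici_self)
          (by positivity) (by positivity)
    _ ≤ f (t / 2) * (p ^ (1 - d) / (q * (d - 1))) +
          a ^ (1 - c) / (b * (c - 1)) * g (t / 2) := by
        rw [sub_half]
        gcongr
        · exact integral_add_mul_rpow_neg_le hp hq hd (by positivity)
        · exact integral_add_mul_rpow_neg_le ha hb hc (by positivity)

end AffinePower

theorem rpow_one_sub_le_div_rpow {x m c : ℝ} (hm : 0 < m) (hmx : m ≤ x) (hc : 0 ≤ c) :
    x ^ (1 - c) ≤ x / m ^ c := by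
  have hx : 0 < x := hm.trans_le hmx
  rw [Real.rpow_sub hx, Real.rpow_one]
  gcongr

/-- For all `a, b > 0`, `c > 1` and `t ≥ 0`,
`∫₀^t (a + b(t−τ))^(−c) (1+τ)^(−c) dτ ≤ (a+b) 2^c / (b (min a b)^c (c−1) (1+t)^c)`. -/
theorem integral_convolution_decay_bound (a b c t : ℝ)
    (ha : 0 < a) (hb : 0 < b) (hc : 1 < c) (ht : 0 ≤ t) :
    (∫ τ in (0 : ℝ)..t, (a + b * (t - τ)) ^ (-c) * (1 + τ) ^ (-c)) ≤
      (a + b) * 2 ^ c / (b * (min a b) ^ c * (c - 1) * (1 + t) ^ c) := by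
  set m := min a b
  have hm : 0 < m := lt_min ha hb
  have hc₀ : 0 ≤ c := zero_le_one.trans hc.le
  have hc₁ : 0 < c - 1 := sub_pos.2 hc
  have hf_half : (a + b * (t / 2)) ^ (-c) ≤ 2 ^ c / (m ^ c * (1 + t) ^ c) :=
    add_mul_half_rpow_neg_le hm (min_le_left a b) (min_le_right a b) hc₀ ht
  have hg_half : (1 + 1 * (t / 2)) ^ (-c) ≤ 2 ^ c / (1 ^ c * (1 + t) ^ c) :=
    add_mul_half_rpow_neg_le one_pos le_rfl le_rfl hc₀ ht
  have ha_pow : a ^ (1 - c) ≤ a / m ^ c := rpow_one_sub_le_div_rpow hm (min_le_left a b) hc₀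
  calc ∫ τ in (0 : ℝ)..t, (a + b * (t - τ)) ^ (-c) * (1 + τ) ^ (-c)
      ≤ (a + b * (t / 2)) ^ (-c) * (1 ^ (1 - c) / (1 * (c - 1))) +
          a ^ (1 - c) / (b * (c - 1)) * (1 + 1 * (t / 2)) ^ (-c) := by
        simpa only [one_mul] using
          integral_convolution_add_mul_rpow_neg_le ha hb hc one_pos one_pos hc ht
    _ ≤ 2 ^ c / (m ^ c * (1 + t) ^ c) * (1 ^ (1 - c) / (1 * (c - 1))) +
          a / m ^ c / (b * (c - 1)) * (2 ^ c / (1 ^ c * (1 + t) ^ c)) := by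
        gcongr
    _ = (a + b) * 2 ^ c / (b * m ^ c * (c - 1) * (1 + t) ^ c) := by
        rw [Real.one_rpow, Real.one_rpow]
        field_simp
        ring
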